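/- Consider the agreement model z_{t+1}^i = Σ_{j=1}^M a_t^{ij} z_t^j for t ≥ 1 and i ∈ {1,…,M}, with arbitrary real initial values z_1^i. If Assumptions 1, 3 and 4 hold, then there exists a consensus value z* ∈ ℝ, independent of i, such that z_t^i → z* as t → ∞ for every i ∈ {1,…,M}. -/

import Mathlib

/-!
The spread `max_i z_t^i - min_i z_t^i` contracts by a fixed factor over windows of a fixed length.

Only finitely many pairs `(i, j)` exist, so after some time every active edge is active infinitely
often. Hence the graph of infinitely-often-active edges is strongly connected, and each of its
edges is used at least once in every window of length `B₂ + 1`.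

If `m` is a lower bound of `z_t`, an edge `(i, j)` with weight at least `α` gives
`z_{t+1}^i - m ≥ α (z_t^j - m)`, and the diagonal weights say that an excess over `m` loses
at most a factor `α` per step while it waits for the next edge (`excess_step`, `excess_wait`).
Following a path from `i` to `k` gives `z_{t+L}^i - m ≥ α^L (z_t^k - m)` with `L` independent of
`t` (`excess_path`), and a single `L` serves all pairs. Taking for `k` a maximizer and for `m` the
minimum, the spread at time `t + L` is at most `1 - α^L` times the spread at time `t`. The minimum
is nondecreasing and bounded and the spread tends to `0`, so all components share the limit of
the minimum (`tendsto_of_contraction`).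
-/

open Filter Finset

section Excess

variable {ι : Type*} [Fintype ι] {b : ℕ → ι → ι → ℝ} {w : ℕ → ι → ℝ} {α m : ℝ}

/-- A single term of the convex combination bounds the excess over `m` from below. -/
lemma excess_step (hb0 : ∀ t i j, 0 ≤ b t i j) (hb1 : ∀ t i, ∑ j, b t i j = 1)
    (hw : ∀ t i, w (t + 1) i = ∑ j, b t i j * w t j) {t : ℕ}
    (hm : ∀ j, m ≤ w t j) (i k : ι) :
    b t i k * (w t k - m) ≤ w (t + 1) i - m := by
  have h : w (t + 1) i - m = ∑ j, b t i j * (w t j - m) := by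
    simp only [mul_sub, Finset.sum_sub_distrib, ← Finset.sum_mul, hb1, hw, one_mul]
  rw [h]
  exact Finset.single_le_sum (f := fun j => b t i j * (w t j - m))
    (fun j _ => mul_nonneg (hb0 t i j) (sub_nonneg.2 (hm j))) (Finset.mem_univ k)

lemma lower_bound_persists (hb0 : ∀ t i j, 0 ≤ b t i j) (hb1 : ∀ t i, ∑ j, b t i j = 1)
    (hw : ∀ t i, w (t + 1) i = ∑ j, b t i j * w t j) {t : ℕ}
    (hm : ∀ j, m ≤ w t j) (n : ℕ) (i : ι) : m ≤ w (t + n) i := by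
  induction n generalizing i with
  | zero => exact hm i
  | succ n ih =>
    have h := excess_step hb0 hb1 hw ih i i
    have h2 := mul_nonneg (hb0 (t + n) i i) (sub_nonneg.2 (ih i))
    rw [← add_assoc]
    linarith

/-- Waiting `n` steps at a vertex costs at most a factor `α ^ n`, by the diagonal weights. -/
lemma excess_wait (hb0 : ∀ t i j, 0 ≤ b t i j) (hb1 : ∀ t i, ∑ j, b t i j = 1)
    (hw : ∀ t i, w (t + 1) i = ∑ j, b t i j * w t j) (hα : 0 < α)
    (hd : ∀ t i, α ≤ b t i i) {t : ℕ} (hm : ∀ j, m ≤ w t j) (n : ℕ) (i : ι) :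
    α ^ n * (w t i - m) ≤ w (t + n) i - m := by
  induction n with
  | zero => simp
  | succ n ih =>
    have hn := lower_bound_persists hb0 hb1 hw hm n
    calc α ^ (n + 1) * (w t i - m) = α * (α ^ n * (w t i - m)) := by ring
      _ ≤ α * (w (t + n) i - m) := by gcongr
      _ ≤ b (t + n) i i * (w (t + n) i - m) :=
        mul_le_mul_of_nonneg_right (hd _ _) (sub_nonneg.2 (hn i))
      _ ≤ w (t + (n + 1)) i - m := excess_step hb0 hb1 hw hn i i

/-- Along a path of edges each active at least once in every window of length `B + 1`,
excess is transmitted in a number of steps that does not depend on the starting time. -/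
lemma excess_path (hb0 : ∀ t i j, 0 ≤ b t i j) (hb1 : ∀ t i, ∑ j, b t i j = 1)
    (hw : ∀ t i, w (t + 1) i = ∑ j, b t i j * w t j) (hα : 0 < α)
    (hd : ∀ t i, α ≤ b t i i) (B : ℕ) {i k : ι}
    (h : Relation.ReflTransGen
      (fun u v => ∀ t, ∃ s, t ≤ s ∧ s ≤ t + B ∧ α ≤ b s u v) i k) :
    ∃ L : ℕ, ∀ (t : ℕ) (m : ℝ), (∀ j, m ≤ w t j) →
      α ^ L * (w t k - m) ≤ w (t + L) i - m := by
  induction h with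
  | refl => exact ⟨0, fun t m _ => by simp⟩
  | @tail j k _ hjk ih =>
    obtain ⟨L, hL⟩ := ih
    refine ⟨B + 1 + L, fun t m hm => ?_⟩
    obtain ⟨s, hts, hsB, hs⟩ := hjk t
    obtain ⟨p, rfl⟩ := Nat.exists_eq_add_of_le hts
    obtain ⟨q, rfl⟩ : ∃ q, B = p + q := ⟨B - p, by omega⟩
    have hp := lower_bound_persists hb0 hb1 hw hm p
    have key : α ^ (p + q + 1) * (w t k - m) ≤ w (t + (p + q + 1)) j - m :=
      calc α ^ (p + q + 1) * (w t k - m) = α ^ q * (α * (α ^ p * (w t k - m))) := by ring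
        _ ≤ α ^ q * (α * (w (t + p) k - m)) := by
          gcongr
          exact excess_wait hb0 hb1 hw hα hd hm p k
        _ ≤ α ^ q * (b (t + p) j k * (w (t + p) k - m)) := by
          have := sub_nonneg.2 (hp k)
          gcongr
        _ ≤ α ^ q * (w (t + p + 1) j - m) := by
          gcongr
          exact excess_step hb0 hb1 hw hp j k
        _ ≤ w (t + p + 1 + q) j - m :=
          excess_wait hb0 hb1 hw hα hd (lower_bound_persists hb0 hb1 hw hm (p + 1)) q j
        _ = w (t + (p + q + 1)) j - m := by
          rw [show t + p + 1 + q = t + (p + q + 1) by omega]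
    calc α ^ (p + q + 1 + L) * (w t k - m)
        = α ^ L * (α ^ (p + q + 1) * (w t k - m)) := by ring
      _ ≤ α ^ L * (w (t + (p + q + 1)) j - m) := by gcongr
      _ ≤ w (t + (p + q + 1) + L) i - m :=
        hL _ m (lower_bound_persists hb0 hb1 hw hm _)
      _ = w (t + (p + q + 1 + L)) i - m := by rw [add_assoc]

/-- The number of transmission steps in `excess_path` can be chosen uniformly in the endpoints. -/
lemma excess_uniform (hb0 : ∀ t i j, 0 ≤ b t i j) (hb1 : ∀ t i, ∑ j, b t i j = 1)
    (hw : ∀ t i, w (t + 1) i = ∑ j, b t i j * w t j) (hα : 0 < α)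
    (hd : ∀ t i, α ≤ b t i i) (B : ℕ)
    (h : ∀ i k, Relation.ReflTransGen
      (fun u v => ∀ t, ∃ s, t ≤ s ∧ s ≤ t + B ∧ α ≤ b s u v) i k) :
    ∃ L : ℕ, ∀ (i k : ι) (t : ℕ) (m : ℝ), (∀ j, m ≤ w t j) →
      α ^ L * (w t k - m) ≤ w (t + L) i - m := by
  choose L hL using fun i k => excess_path hb0 hb1 hw hα hd B (h i k)
  refine ⟨Finset.univ.sup fun p : ι × ι => L p.1 p.2, fun i k t m hm => ?_⟩
  obtain ⟨q, hq⟩ := Nat.exists_eq_add_of_le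
    (Finset.le_sup (f := fun p : ι × ι => L p.1 p.2) (Finset.mem_univ (i, k)))
  rw [hq]
  calc α ^ (L i k + q) * (w t k - m) = α ^ q * (α ^ (L i k) * (w t k - m)) := by ring
    _ ≤ α ^ q * (w (t + L i k) i - m) := by
      gcongr
      exact hL i k t m hm
    _ ≤ w (t + L i k + q) i - m :=
      excess_wait hb0 hb1 hw hα hd (lower_bound_persists hb0 hb1 hw hm _) q i
    _ = w (t + (L i k + q)) i - m := by rw [add_assoc]

end Excess

/-- Monotone lower and upper envelopes whose gap contracts by a fixed factor over windows of
length `L` squeeze everything between them to one limit. -/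
lemma tendsto_of_contraction {ι : Type*} {w : ℕ → ι → ℝ} {lo hi : ℕ → ℝ} {c : ℝ} {L : ℕ}
    (hc : 0 < c) (hlo : Monotone lo) (hhi : Antitone hi) (hle : ∀ t, lo t ≤ hi t)
    (hw : ∀ t i, lo t ≤ w t i ∧ w t i ≤ hi t)
    (hcon : ∀ t, hi (t + L) - lo (t + L) ≤ (1 - c) * (hi t - lo t)) :
    ∃ x : ℝ, ∀ i, Tendsto (fun t => w t i) atTop (nhds x) := by
  have h1 : Tendsto lo atTop (nhds (⨆ t, lo t)) :=
    tendsto_atTop_ciSup hlo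
      ⟨hi 0, by rintro _ ⟨t, rfl⟩; exact (hle t).trans (hhi (Nat.zero_le t))⟩
  have h2 : Tendsto hi atTop (nhds (⨅ t, hi t)) :=
    tendsto_atTop_ciInf hhi
      ⟨lo 0, by rintro _ ⟨t, rfl⟩; exact (hlo (Nat.zero_le t)).trans (hle t)⟩
  set x := ⨆ t, lo t
  set y := ⨅ t, hi t
  have h3 : y - x ≤ (1 - c) * (y - x) :=
    le_of_tendsto_of_tendsto' ((tendsto_add_atTop_iff_nat L).2 (h2.sub h1))
      ((h2.sub h1).const_mul (1 - c)) hcon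
  have h4 : x ≤ y := le_of_tendsto_of_tendsto' h1 h2 hle
  have h5 : y = x := by
    refine le_antisymm ?_ h4
    by_contra! h
    nlinarith [mul_pos hc (sub_pos.2 h)]
  rw [h5] at h2
  exact ⟨x, fun i => tendsto_of_tendsto_of_tendsto_of_le_of_le h1 h2
    (fun t => (hw t i).1) (fun t => (hw t i).2)⟩

/-- If every tail union of a sequence of edge sets on a finite type is strongly connected, so is
the graph of the edges that occur infinitely often: the other edges stop occurring at a common
time. -/
lemma reflTransGen_infinitely_often {ι : Type*} [Finite ι] {E : ℕ → ι → ι → Prop}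
    (h : ∀ t, 1 ≤ t → ∀ i j, Relation.ReflTransGen (fun u v => ∃ s, t ≤ s ∧ E s u v) i j)
    (i j : ι) :
    Relation.ReflTransGen (fun u v => ∀ t, ∃ s, t ≤ s ∧ E s u v) i j := by
  have hT : ∀ᶠ t in atTop, ∀ p : ι × ι,
      (∃ s, t ≤ s ∧ E s p.1 p.2) → ∀ t', ∃ s, t' ≤ s ∧ E s p.1 p.2 := by
    rw [eventually_all]
    intro p
    by_cases hp : ∀ t', ∃ s, t' ≤ s ∧ E s p.1 p.2
    · exact Eventually.of_forall fun _ _ => hp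
    · push Not at hp
      obtain ⟨t', ht'⟩ := hp
      filter_upwards [eventually_ge_atTop t'] with t ht
      rintro ⟨s, hs, hE⟩
      exact absurd hE (ht' s (ht.trans hs))
  obtain ⟨T, hT, hT1⟩ := (hT.and (eventually_ge_atTop 1)).exists
  exact Relation.ReflTransGen.mono (fun u v huv => hT (u, v) huv) _ _ (h T hT1 i j)

/-- Theorem 5.1, Blondel et al..
Consider the agreement model `z_{t+1}^i = ∑_j a_t^{ij} z_t^j` for `t ≥ 1`, with arbitrary
real initial values. If Assumptions 1, 3 and 4 hold, then there exists a consensus value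
`z*`, independent of `i`, such that `z_t^i → z*` as `t → ∞` for every `i`. -/
theorem stmt_5
    (M : ℕ) (hM : 1 ≤ M)
    (a : ℕ → Fin M → Fin M → ℝ)
    (ha0 : ∀ t i j, 0 ≤ a t i j)
    (ha1 : ∀ t i, ∑ j, a t i j = 1)
    -- Assumption 1 (convex combinations)
    (α : ℝ) (hα : α ∈ Set.Ioc (0 : ℝ) 1)
    (ha_diag : ∀ t i, α ≤ a t i i)
    (ha_val : ∀ t i j, a t i j = 0 ∨ a t i j ∈ Set.Icc α 1)
    -- Assumption 3 (graph connectivity)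
    (h3 : ∀ t : ℕ, 1 ≤ t → ∀ i j : Fin M,
      Relation.ReflTransGen (fun u v : Fin M => ∃ s : ℕ, t ≤ s ∧ 0 < a s u v) i j)
    -- Assumption 4 (bounded intercommunication intervals)
    (h4 : ∃ B2 : ℕ, ∀ i j : Fin M, (∀ t : ℕ, ∃ s : ℕ, t ≤ s ∧ 0 < a s i j) →
      ∀ t : ℕ, 1 ≤ t → ∃ s : ℕ, t ≤ s ∧ s ≤ t + B2 ∧ 0 < a s i j)
    -- the agreement model
    (z : ℕ → Fin M → ℝ)
    (hz : ∀ t : ℕ, 1 ≤ t → ∀ i, z (t + 1) i = ∑ j, a t i j * z t j) :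
    ∃ zstar : ℝ, ∀ i, Tendsto (fun t => z t i) atTop (nhds zstar) := by
  obtain ⟨B, hB⟩ := h4
  have hα0 : 0 < α := hα.1
  have : Nonempty (Fin M) := ⟨⟨0, hM⟩⟩
  -- the recursion starts at time `1`, so times are shifted by one
  set b : ℕ → Fin M → Fin M → ℝ := fun t => a (t + 1) with hb
  set w : ℕ → Fin M → ℝ := fun t => z (t + 1) with hwdef
  have hb0 : ∀ t i j, 0 ≤ b t i j := fun t => ha0 (t + 1)
  have hb1 : ∀ t i, ∑ j, b t i j = 1 := fun t => ha1 (t + 1)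
  have hd : ∀ t i, α ≤ b t i i := fun t => ha_diag (t + 1)
  have hw : ∀ t i, w (t + 1) i = ∑ j, b t i j * w t j :=
    fun t i => hz (t + 1) (Nat.le_add_left 1 t) i
  have hconn : ∀ i k, Relation.ReflTransGen
      (fun u v => ∀ t, ∃ s, t ≤ s ∧ s ≤ t + B ∧ α ≤ b s u v) i k := by
    intro i k
    refine Relation.ReflTransGen.mono ?_ _ _
      (reflTransGen_infinitely_often (E := fun s u v => 0 < a s u v) h3 i k)
    intro u v huv t
    obtain ⟨s, h1, h2, h5⟩ := hB u v huv (t + 1) (Nat.le_add_left 1 t)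
    refine ⟨s - 1, by omega, by omega, ?_⟩
    have hs : s - 1 + 1 = s := by omega
    simp only [hb, hs]
    exact ((ha_val s u v).resolve_left h5.ne').1
  obtain ⟨L, hL⟩ := excess_uniform hb0 hb1 hw hα0 hd B hconn
  have hlow : ∀ t i, (⨅ j, w t j) ≤ w t i := fun t i => ciInf_le (Set.finite_range _).bddBelow i
  have hupp : ∀ t i, w t i ≤ ⨆ j, w t j := fun t i => le_ciSup (Set.finite_range _).bddAbove i
  have hanti : Antitone fun t => ⨆ j, w t j := by
    refine antitone_nat_of_succ_le fun t => ciSup_le fun i => ?_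
    rw [hw]
    calc ∑ j, b t i j * w t j ≤ ∑ j, b t i j * ⨆ j, w t j :=
          Finset.sum_le_sum fun j _ => mul_le_mul_of_nonneg_left (hupp t j) (hb0 t i j)
      _ = ⨆ j, w t j := by rw [← Finset.sum_mul, hb1, one_mul]
  obtain ⟨x, hx⟩ := tendsto_of_contraction (w := w) (lo := fun t => ⨅ j, w t j)
    (hi := fun t => ⨆ j, w t j) (L := L) (pow_pos hα0 L)
    (monotone_nat_of_le_succ fun t => le_ciInf fun i =>
      lower_bound_persists hb0 hb1 hw (hlow t) 1 i)
    hanti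
    (fun t => (hlow t ⟨0, hM⟩).trans (hupp t ⟨0, hM⟩))
    (fun t i => ⟨hlow t i, hupp t i⟩)
    (fun t => by
      obtain ⟨k, hk⟩ := exists_eq_ciSup_of_finite (f := w t)
      have h1 : (⨅ j, w t j) + α ^ L * ((⨆ j, w t j) - ⨅ j, w t j) ≤ ⨅ j, w (t + L) j := by
        refine le_ciInf fun i => ?_
        have h2 := hL i k t _ (hlow t)
        rw [hk] at h2
        linarith
      have h3 : (⨆ j, w (t + L) j) ≤ ⨆ j, w t j := hanti (Nat.le_add_right t L)
      linarith)
  exact ⟨x, fun i => (tendsto_add_atTop_iff_nat 1).1 (hx i)⟩
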